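/- Let n = 2 with s_1 = s_2, and let φ be a continuous incentive function such that x_{iα} + φ_{iα}(x) ≥ 0 for every x ∈ Δ, i ∈ {1,2}, and α, and such that φ_1(x) = φ_2(x) for every x ∈ Δ with x_1 = x_2. Then there exists a symmetric incentive equilibrium: some x̂ ∈ Δ with x̂_1 = x̂_2 satisfying φ_{iα}(x̂) = x̂_{iα} · Σ_β φ_{iβ}(x̂) for every player i and strategy α. -/

import Mathlib

open Finset

/-- Mixed strategy profile space `Δ`: player `i` has `s i + 1` pure strategies
(so every player has at least one strategy). -/
def Δset {n : ℕ} (s : Fin n → ℕ) : Set (∀ i, Fin (s i + 1) → ℝ) :=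
  {x | (∀ i α, 0 ≤ x i α) ∧ ∀ i, ∑ α, x i α = 1}

/-- The `α`-th standard unit vector of `ℝ^{m+1}` (pure strategy `α`). -/
def pureVec {m : ℕ} (α : Fin (m + 1)) : Fin (m + 1) → ℝ :=
  fun β => if β = α then 1 else 0

/-- Multilinear extension of a payoff function defined on pure profiles. -/
noncomputable def mulExt {n : ℕ} {s : Fin n → ℕ} (u : (∀ j, Fin (s j + 1)) → ℝ)
    (x : ∀ i, Fin (s i + 1) → ℝ) : ℝ :=
  ∑ p : ∀ j, Fin (s j + 1), (∏ j, x j (p j)) * u p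

/-- The updating map `T(x)_i = (x_i + Σ_α φ_{iα}(x) e_{iα}) / (1 + Σ_β φ_{iβ}(x))`. -/
noncomputable def Tmap {n : ℕ} {s : Fin n → ℕ}
    (φ : (∀ i, Fin (s i + 1) → ℝ) → ∀ i, Fin (s i + 1) → ℝ)
    (x : ∀ i, Fin (s i + 1) → ℝ) : ∀ i, Fin (s i + 1) → ℝ :=
  fun i α => (x i α + φ x i α) / (1 + ∑ β, φ x i β)

/-- `φ` is an incentive function. -/
def IsInc {n : ℕ} {s : Fin n → ℕ}
    (φ : (∀ i, Fin (s i + 1) → ℝ) → ∀ i, Fin (s i + 1) → ℝ) : Prop :=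
  (∀ x i α, x i α = 0 → 0 ≤ φ x i α) ∧ ∀ x i, (∑ β, φ x i β) ≠ -1

/-- `x` is an incentive equilibrium for `φ`. -/
def IncEq {n : ℕ} {s : Fin n → ℕ}
    (φ : (∀ i, Fin (s i + 1) → ℝ) → ∀ i, Fin (s i + 1) → ℝ)
    (x : ∀ i, Fin (s i + 1) → ℝ) : Prop :=
  ∀ i α, φ x i α = x i α * ∑ β, φ x i β

/-- `x` is a Nash equilibrium: each player's payoff is the maximum over pure deviations. -/
def NashEq {n : ℕ} {s : Fin n → ℕ} (u : Fin n → (∀ j, Fin (s j + 1)) → ℝ)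
    (x : ∀ i, Fin (s i + 1) → ℝ) : Prop :=
  ∀ i, mulExt (u i) x =
    Finset.univ.sup' Finset.univ_nonempty
      (fun α => mulExt (u i) (Function.update x i (pureVec α)))


/-!
The symmetric equilibria are the fixed points, on the diagonal of `Δ`, of the updating map `Tmap φ`,
which is one map of a simplex to itself, so Brouwer's theorem applies.

Brouwer's theorem is obtained from Scarf's combinatorial argument. Rank a finite set by finitely
many linear orders, one per colour, and call a subset undominated if no element lies above all its
row minima. Removing an element from an undominated set with one element per order and replacing it
can be done in exactly one way, except at the boundary, so undominated sets behave like the cells of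
a triangulated simplex, and the parity count of Sperner's lemma gives an undominated set carrying
all colours. For the grid points of a simplex ranked by their coordinates, undominated sets are
small, and compactness turns this into a common point of the closed sets
`{x | x i ≤ f x i}`, which is a fixed point of `f`.
-/

section Counting

variable {V ι : Type*} [DecidableEq V] [DecidableEq ι]

theorem card_filter_image_erase_eq_image {f : V → ι} {s : Finset V} (h : #(s.image f) + 1 = #s) :
    #{k ∈ s | (s.erase k).image f = s.image f} = 2 := by
  obtain ⟨a, ha, b, hb, hab, hfab⟩ := exists_ne_map_eq_of_card_lt_of_maps_to
    (show #(s.image f) < #s by lia) fun x hx => mem_image_of_mem f hx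
  have image_erase {x y : V} (hx : x ∈ s) (hy : y ∈ s) (hxy : y ≠ x) (hf : f x = f y) :
      (s.erase x).image f = s.image f := by
    conv_rhs => rw [← insert_erase hx, image_insert, hf]
    exact (insert_eq_self.2 (mem_image_of_mem f (mem_erase.2 ⟨hxy, hy⟩))).symm
  refine card_eq_two.2 ⟨a, b, hab, ext fun k => ?_⟩
  simp only [mem_filter, mem_insert, mem_singleton]
  constructor
  · rintro ⟨hk, hkf⟩
    have hinj : Set.InjOn f (s.erase k) := by
      rw [← card_image_iff, hkf, card_erase_of_mem hk]
      lia
    by_contra! hne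
    exact hab (hinj (mem_coe.2 (mem_erase.2 ⟨hne.1.symm, ha⟩))
      (mem_coe.2 (mem_erase.2 ⟨hne.2.symm, hb⟩)) hfab)
  · rintro (rfl | rfl)
    · exact ⟨ha, image_erase ha hb hab.symm hfab⟩
    · exact ⟨hb, image_erase hb ha hab hfab.symm⟩

theorem card_filter_superset_eq_card_filter_insert [Fintype V] {𝓡 : Finset (Finset V)}
    {d : Finset V} (h𝓡 : ∀ ρ ∈ 𝓡, #d + 1 = #ρ) :
    #{ρ ∈ 𝓡 | d ⊆ ρ} = #{y | y ∉ d ∧ insert y d ∈ 𝓡} := by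
  refine (card_bij (fun y _ => insert y d) ?_ ?_ ?_).symm
  · simp +contextual [subset_insert]
  · exact fun y hy z _ h => (insert_inj (mem_filter.1 hy).2.1).1 h
  · intro ρ hρ
    obtain ⟨hρ, hdρ⟩ := mem_filter.1 hρ
    obtain ⟨y, hy, rfl⟩ := exists_eq_insert_iff.2 ⟨hdρ, h𝓡 ρ hρ⟩
    exact ⟨y, by simp [hy, hρ], rfl⟩

theorem card_filter_subset_eq_card_filter_erase {𝓓 : Finset (Finset V)} {ρ : Finset V}
    (h𝓓 : ∀ d ∈ 𝓓, #d + 1 = #ρ) :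
    #{d ∈ 𝓓 | d ⊆ ρ} = #{x ∈ ρ | ρ.erase x ∈ 𝓓} := by
  refine (card_bij (fun x _ => ρ.erase x) ?_ ?_ ?_).symm
  · simp +contextual [erase_subset]
  · exact fun x hx y hy h => erase_injOn ρ (mem_filter.1 hx).1 (mem_filter.1 hy).1 h
  · intro d hd
    obtain ⟨hd𝓓, hdρ⟩ := mem_filter.1 hd
    obtain ⟨x, hx, rfl⟩ := exists_eq_insert_iff.2 ⟨hdρ, h𝓓 d hd𝓓⟩
    have hxd : (insert x d).erase x = d := erase_insert hx
    exact ⟨x, by simp [hxd, hd𝓓], hxd⟩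

end Counting

section Sperner

variable {V ι : Type*} [DecidableEq V] [Fintype ι] [DecidableEq ι] {c : V → ι} {i₀ : ι}

/-- A door for the colouring `c` is a set whose elements carry every colour except `i₀` exactly
once. Doors are the facets crossed in the path-following proof of Sperner's lemma; the cells they
bound have one element more. -/
def IsDoor (c : V → ι) (i₀ : ι) (d : Finset V) : Prop :=
  #d + 1 = Fintype.card ι ∧ d.image c = univ.erase i₀

theorem even_card_filter_isDoor_erase [DecidablePred (IsDoor c i₀)] {ρ : Finset V}
    (hρ : #ρ = Fintype.card ι) (hc : ρ.image c ≠ univ) :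
    Even #{x ∈ ρ | IsDoor c i₀ (ρ.erase x)} := by
  by_cases hρc : ρ.image c = univ.erase i₀
  · have hcard : #(ρ.image c) + 1 = #ρ := by
      rw [hρc, card_erase_add_one (mem_univ i₀), card_univ, hρ]
    have hdoor : ∀ x ∈ ρ, IsDoor c i₀ (ρ.erase x) ↔ (ρ.erase x).image c = ρ.image c :=
      fun x hx => by rw [IsDoor, card_erase_add_one hx, hρc]; exact and_iff_right hρ
    rw [filter_congr hdoor, card_filter_image_erase_eq_image hcard]
    exact even_two
  · have hnone : ∀ x ∈ ρ, ¬ IsDoor c i₀ (ρ.erase x) := by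
      rintro x hx ⟨-, hd⟩
      have hρx : ρ.image c = insert (c x) (univ.erase i₀) := by
        rw [← hd, ← image_insert, insert_erase hx]
      obtain hx₀ | hx₀ := eq_or_ne (c x) i₀
      · exact hc (by rw [hρx, hx₀, insert_erase (mem_univ i₀)])
      · exact hρc (by rw [hρx, insert_eq_self.2 (mem_erase.2 ⟨hx₀, mem_univ _⟩)])
    simp [filter_false_of_mem hnone]

theorem exists_image_eq_univ_of_isDoor [Fintype V] {𝓡 : Finset (Finset V)}
    (h𝓡 : ∀ ρ ∈ 𝓡, #ρ = Fintype.card ι) {d₀ : Finset V} (hd₀ : IsDoor c i₀ d₀)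
    (hodd : Odd #{y | y ∉ d₀ ∧ insert y d₀ ∈ 𝓡})
    (heven : ∀ d, IsDoor c i₀ d → d ≠ d₀ → Even #{y | y ∉ d ∧ insert y d ∈ 𝓡}) :
    ∃ ρ ∈ 𝓡, ρ.image c = univ := by
  classical
  by_contra! hno
  let 𝓓 : Finset (Finset V) := {d | IsDoor c i₀ d}
  have mem_𝓓 {d : Finset V} : d ∈ 𝓓 ↔ IsDoor c i₀ d := by simp [𝓓]
  have hcells {d : Finset V} (hd : d ∈ 𝓓) :
      #{ρ ∈ 𝓡 | d ⊆ ρ} = #{y | y ∉ d ∧ insert y d ∈ 𝓡} :=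
    card_filter_superset_eq_card_filter_insert fun ρ hρ => (mem_𝓓.1 hd).1.trans (h𝓡 ρ hρ).symm
  have hdoors {ρ : Finset V} (hρ : ρ ∈ 𝓡) : Even #{d ∈ 𝓓 | d ⊆ ρ} := by
    rw [card_filter_subset_eq_card_filter_erase fun d hd => (mem_𝓓.1 hd).1.trans (h𝓡 ρ hρ).symm]
    simpa only [mem_𝓓] using even_card_filter_isDoor_erase (h𝓡 ρ hρ) (hno ρ hρ)
  have hsum_even : Even (∑ d ∈ 𝓓, #{ρ ∈ 𝓡 | d ⊆ ρ}) :=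
    (sum_card_bipartiteAbove_eq_sum_card_bipartiteBelow (· ⊆ ·) (s := 𝓓) (t := 𝓡)) ▸
      even_sum _ fun ρ hρ => hdoors hρ
  have hsum_odd : Odd (∑ d ∈ 𝓓, #{ρ ∈ 𝓡 | d ⊆ ρ}) := by
    rw [← add_sum_erase _ _ (mem_𝓓.2 hd₀), hcells (mem_𝓓.2 hd₀)]
    refine hodd.add_even (even_sum _ fun d hd => ?_)
    rw [mem_erase] at hd
    rw [hcells hd.2]
    exact heven d (mem_𝓓.1 hd.2) hd.1
  exact Nat.not_even_iff_odd.2 hsum_odd hsum_even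

end Sperner

section Scarf

variable {V ι α : Type*} [LinearOrder α] {r : ι → V → α} {m : ι → V} {d : Finset V} {k : ι}
  {y : V}

/-- A set is undominated for the rankings `r i` if no element is ranked strictly above the minimum
of the set by every `r i`. With `#s = #ι` these are Scarf's primitive sets. -/
def IsUndominated (r : ι → V → α) (s : Finset V) : Prop :=
  ∀ y, ∃ i, ∀ x ∈ s, r i y ≤ r i x

/-- `m i` is an element of `d` ranked lowest by `r i`. These row minima decide which elements can
be added to an undominated set. -/
def IsRowMin (r : ι → V → α) (d : Finset V) (m : ι → V) : Prop :=
  ∀ i, m i ∈ d ∧ ∀ x ∈ d, r i (m i) ≤ r i x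

/-- `y` is a pivot in direction `k` if it is the `r k`-highest among the elements lying strictly
above all row minima except possibly the `k`-th. Pivots are the elements that complete a set with
row minima `m` to a primitive set. -/
def IsPivot (r : ι → V → α) (m : ι → V) (k : ι) (y : V) : Prop :=
  (∀ l ≠ k, r l (m l) < r l y) ∧ ∀ z, (∀ l ≠ k, r l (m l) < r l z) → r k z ≤ r k y

theorem IsUndominated.mono {s t : Finset V} (ht : IsUndominated r t) (hst : s ⊆ t) :
    IsUndominated r s := fun y =>
  (ht y).imp fun _ hi x hx => hi x (hst hx)

theorem exists_isRowMin (r : ι → V → α) (hd : d.Nonempty) : ∃ m, IsRowMin r d m :=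
  Classical.axiom_of_choice fun i => exists_min_image d (r i) hd

theorem IsUndominated.exists_le_rowMin (hd : IsUndominated r d) (hm : IsRowMin r d m) (y : V) :
    ∃ i, r i y ≤ r i (m i) :=
  (hd y).imp fun i hi => hi _ (hm i).1

theorem IsUndominated.image_rowMin [Fintype ι] [DecidableEq V]
    (hr : ∀ i, Function.Injective (r i)) (hd : IsUndominated r d) (hm : IsRowMin r d m) :
    univ.image m = d := by
  refine Subset.antisymm (image_subset_iff.2 fun i _ => (hm i).1) fun z hz => ?_
  obtain ⟨i, hi⟩ := hd.exists_le_rowMin hm z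
  exact mem_image.2 ⟨i, mem_univ i, hr i (((hm i).2 z hz).antisymm hi)⟩

theorem exists_isPivot [Finite V] (h : ∃ y, ∀ l ≠ k, r l (m l) < r l y) :
    ∃ y, IsPivot r m k y :=
  Set.exists_max_image {y | ∀ l ≠ k, r l (m l) < r l y} (r k) (Set.toFinite _) h

theorem IsPivot.notMem [Fintype ι] [DecidableEq ι] [DecidableEq V] (hy : IsPivot r m k y)
    (hk : (univ.erase k).image m = d) : y ∉ d := by
  rw [← hk, mem_image]
  rintro ⟨l, hl, rfl⟩
  exact lt_irrefl _ (hy.1 l (ne_of_mem_erase hl))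

theorem IsPivot.eq_direction (hd : IsUndominated r d) (hm : IsRowMin r d m) {j : ι}
    (hj : IsPivot r m j y) (hk : IsPivot r m k y) : j = k := by
  obtain ⟨i, hi⟩ := hd.exists_le_rowMin hm y
  have eq_of_isPivot {l : ι} (hl : IsPivot r m l y) : i = l :=
    by_contra fun hil => hi.not_gt (hl.1 i hil)
  exact (eq_of_isPivot hj).symm.trans (eq_of_isPivot hk)

theorem IsPivot.isUndominated_insert [DecidableEq V] (hd : IsUndominated r d)
    (hm : IsRowMin r d m) (hy : IsPivot r m k y) : IsUndominated r (insert y d) := by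
  have hyk : r k y ≤ r k (m k) := by
    obtain ⟨i, hi⟩ := hd.exists_le_rowMin hm y
    obtain rfl | hik := eq_or_ne i k
    · exact hi
    · exact absurd (hy.1 i hik) hi.not_gt
  intro z
  by_contra! hz
  have hzy : r k z ≤ r k y := by
    refine hy.2 z fun l hl => ?_
    obtain ⟨x, hx, hxz⟩ := hz l
    obtain rfl | hx := mem_insert.1 hx
    · exact (hy.1 l hl).trans hxz
    · exact ((hm l).2 x hx).trans_lt hxz
  obtain ⟨x, hx, hxz⟩ := hz k
  obtain rfl | hx := mem_insert.1 hx
  · exact hxz.not_ge hzy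
  · exact hxz.not_ge (hzy.trans (hyk.trans ((hm k).2 x hx)))

theorem IsUndominated.exists_isPivot_of_insert [Fintype ι] [DecidableEq ι] [DecidableEq V]
    (hr : ∀ i, Function.Injective (r i)) (hm : IsRowMin r d m) (hcard : #d + 1 = Fintype.card ι)
    (hyd : y ∉ d) (h : IsUndominated r (insert y d)) :
    ∃ k, (univ.erase k).image m = d ∧ IsPivot r m k y := by
  obtain ⟨k, hk⟩ := h y
  have hrow : ∀ z ∈ d, ∃ i ≠ k, m i = z ∧ r i (m i) < r i y := by
    intro z hz
    have hzy : z ≠ y := ne_of_mem_of_not_mem hz hyd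
    obtain ⟨i, hi⟩ := h z
    have hiz : m i = z := hr i (((hm i).2 z hz).antisymm (hi _ (mem_insert_of_mem (hm i).1)))
    have hlt : r i z < r i y := (hi y (mem_insert_self y d)).lt_of_ne ((hr i).ne hzy)
    refine ⟨i, ?_, hiz, hiz ▸ hlt⟩
    rintro rfl
    exact hlt.not_ge (hk z (mem_insert_of_mem hz))
  have himage : (univ.erase k).image m = d := by
    refine Subset.antisymm (image_subset_iff.2 fun i _ => (hm i).1) fun z hz => ?_
    obtain ⟨i, hik, hiz, -⟩ := hrow z hz
    exact mem_image.2 ⟨i, mem_erase.2 ⟨hik, mem_univ i⟩, hiz⟩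
  have hinj : Set.InjOn m (univ.erase k : Finset ι) := by
    rw [← card_image_iff, himage, card_erase_of_mem (mem_univ k), card_univ]
    lia
  refine ⟨k, himage, fun l hl => ?_, fun z hz => ?_⟩
  · obtain ⟨i, hik, hil, hiy⟩ := hrow (m l) (hm l).1
    obtain rfl : i = l := hinj (by simpa using hik) (by simpa using hl) hil
    exact hiy
  · obtain ⟨i, hi⟩ := h z
    obtain rfl | hik := eq_or_ne i k
    · exact hi y (mem_insert_self y d)
    · exact absurd (hz i hik) (hi _ (mem_insert_of_mem (hm i).1)).not_gt

theorem IsUndominated.card_filter_insert_eq_two [Fintype V] [Fintype ι] [DecidableEq V]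
    [DecidablePred (IsUndominated r)] (hr : ∀ i, Function.Injective (r i))
    (hd : IsUndominated r d) (hcard : #d + 1 = Fintype.card ι) (hm : IsRowMin r d m)
    (habove : ∀ k, ∃ y, ∀ l ≠ k, r l (m l) < r l y) :
    #{y | y ∉ d ∧ IsUndominated r (insert y d)} = 2 := by
  classical
  have himage : univ.image m = d := hd.image_rowMin hr hm
  choose p hp using fun k => exists_isPivot (habove k)
  rw [← card_filter_image_erase_eq_image (f := m) (s := univ) (by rw [himage, hcard, card_univ]),
    himage]
  refine (card_bij (fun k _ => p k) ?_ ?_ ?_).symm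
  · intro k hk
    exact mem_filter.2 ⟨mem_univ _, (hp k).notMem (mem_filter.1 hk).2,
      (hp k).isUndominated_insert hd hm⟩
  · exact fun j _ k _ hjk => (hp j).eq_direction hd hm (hjk ▸ hp k)
  · intro y hy
    obtain ⟨-, hyd, hy⟩ := mem_filter.1 hy
    obtain ⟨k, hk, hky⟩ := hy.exists_isPivot_of_insert hr hm hcard hyd
    exact ⟨k, by simpa using hk, hr k ((hky.2 _ (hp k).1).antisymm ((hp k).2 _ hky.1))⟩

/-- Slack elements: `s i` is the lowest element in the ranking `r i`, but in every other ranking it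
is above all elements that are not slack. Adding them to a family of points closes up the boundary:
`s i` in a set records that no point was chosen for the ranking `r i`. -/
structure IsSlack (r : ι → V → α) (s : ι → V) : Prop where
  lt_of_ne : ∀ i x, x ≠ s i → r i (s i) < r i x
  lt_of_notMem_range : ∀ x ∉ Set.range s, ∀ i j, i ≠ j → r i x < r i (s j)

variable {s : ι → V}

theorem IsSlack.le (hs : IsSlack r s) (i : ι) (x : V) : r i (s i) ≤ r i x := by
  obtain rfl | hx := eq_or_ne x (s i)
  · exact le_rfl
  · exact (hs.lt_of_ne i x hx).le

theorem IsSlack.card_filter_insert_eq_one [Fintype V] [Fintype ι] [DecidableEq ι]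
    [DecidableEq V] [DecidablePred (IsUndominated r)] (hr : ∀ i, Function.Injective (r i))
    (hs : IsSlack r s) {i₀ : ι} (hi₀ : s i₀ ∉ (univ.erase i₀).image s) :
    #{y | y ∉ (univ.erase i₀).image s ∧ IsUndominated r (insert y ((univ.erase i₀).image s))} =
      1 := by
  set d₀ := (univ.erase i₀).image s with hd₀
  have mem_d₀ {l : ι} (hl : l ≠ i₀) : s l ∈ d₀ := mem_image_of_mem s (by simpa using hl)
  obtain ⟨top, htop, hmax⟩ := exists_max_image d₀ᶜ (r i₀) ⟨s i₀, mem_compl.2 hi₀⟩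
  rw [mem_compl] at htop
  refine card_eq_one.2 ⟨top, ext fun y => ?_⟩
  simp only [mem_filter, mem_univ, true_and, mem_singleton]
  constructor
  · rintro ⟨hyd, hy⟩
    obtain ⟨i, hi⟩ := hy top
    obtain rfl | hii₀ := eq_or_ne i i₀
    · exact hr i ((hmax y (mem_compl.2 hyd)).antisymm (hi y (mem_insert_self y d₀)))
    · have hlt := hs.lt_of_ne i top (ne_of_mem_of_not_mem (mem_d₀ hii₀) htop).symm
      exact absurd hlt (hi _ (mem_insert_of_mem (mem_d₀ hii₀))).not_gt
  · rintro rfl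
    refine ⟨htop, fun z => ?_⟩
    by_cases hz : z ∈ d₀
    · obtain ⟨l, -, rfl⟩ := mem_image.1 hz
      exact ⟨l, fun x _ => hs.le l x⟩
    · refine ⟨i₀, forall_mem_insert _ _ _ |>.2 ⟨hmax z (mem_compl.2 hz), ?_⟩⟩
      simp only [hd₀, forall_mem_image]
      intro l hl
      by_cases hzs : z ∈ Set.range s
      · obtain ⟨j, rfl⟩ := hzs
        obtain rfl : j = i₀ := by_contra fun hj => hz (mem_d₀ hj)
        exact hs.le j _
      · exact (hs.lt_of_notMem_range z hzs i₀ l (ne_of_mem_erase hl).symm).le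

theorem IsSlack.even_card_filter_insert [Fintype V] [Fintype ι] [DecidableEq V]
    [DecidablePred (IsUndominated r)] (hr : ∀ i, Function.Injective (r i))
    (hs : IsSlack r s) (hcard : #d + 1 = Fintype.card ι) (hd : ∃ t ∈ d, t ∉ Set.range s) :
    Even #{y | y ∉ d ∧ IsUndominated r (insert y d)} := by
  by_cases hdom : IsUndominated r d
  · obtain ⟨t, htd, hts⟩ := hd
    obtain ⟨m, hm⟩ := exists_isRowMin r ⟨t, htd⟩
    rw [hdom.card_filter_insert_eq_two hr hcard hm fun k => ⟨s k, fun l hl =>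
      ((hm l).2 t htd).trans_lt (hs.lt_of_notMem_range t hts l k hl)⟩]
    exact even_two
  · rw [filter_false_of_mem fun y _ hy => hdom (hy.2.mono (subset_insert y d))]
    simp

theorem IsSlack.exists_isUndominated_of_injective [Finite V] [Fintype ι] [Nonempty ι]
    [DecidableEq ι] (hr : ∀ i, Function.Injective (r i)) (hs : IsSlack r s) {c : V → ι}
    (hc : Function.LeftInverse c s) :
    ∃ ρ : Finset V, IsUndominated r ρ ∧ ρ.image c = univ := by
  classical
  have := Fintype.ofFinite V
  let i₀ : ι := Classical.arbitrary ι
  let 𝓡 : Finset (Finset V) := {ρ | #ρ = Fintype.card ι ∧ IsUndominated r ρ}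
  have hcells {d : Finset V} (hd : #d + 1 = Fintype.card ι) :
      #{y | y ∉ d ∧ insert y d ∈ 𝓡} = #{y | y ∉ d ∧ IsUndominated r (insert y d)} := by
    refine congrArg card (filter_congr fun y _ => and_congr_right fun hy => ?_)
    simp [𝓡, card_insert_of_notMem hy, hd]
  have hd₀ : IsDoor c i₀ ((univ.erase i₀).image s) := by
    refine ⟨?_, by rw [image_image, hc.comp_eq_id, image_id]⟩
    rw [card_image_of_injective _ hc.injective, card_erase_add_one (mem_univ i₀), card_univ]
  obtain ⟨ρ, hρ, hρc⟩ : ∃ ρ ∈ 𝓡, ρ.image c = univ := by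
    refine exists_image_eq_univ_of_isDoor (fun ρ hρ => (mem_filter.1 hρ).2.1) hd₀ ?_ ?_
    · rw [hcells hd₀.1, hs.card_filter_insert_eq_one hr (by simp [hc.injective.eq_iff])]
      exact odd_one
    · intro d hd hne
      rw [hcells hd.1]
      refine hs.even_card_filter_insert hr hd.1 ?_
      by_contra! hslack
      have hsc : Set.EqOn (s ∘ c) id d := by
        intro x hx
        obtain ⟨i, rfl⟩ := hslack x hx
        exact congrArg s (hc i)
      exact hne (by rw [← hd.2, image_image, image_congr hsc, image_id])
  exact ⟨ρ, (mem_filter.1 hρ).2.2, hρc⟩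

theorem IsSlack.exists_isUndominated_image_eq_univ [Finite V] [Fintype ι] [Nonempty ι]
    [DecidableEq ι] (hs : IsSlack r s) {c : V → ι} (hc : Function.LeftInverse c s) :
    ∃ ρ : Finset V, IsUndominated r ρ ∧ ρ.image c = univ := by
  obtain ⟨n, ⟨e⟩⟩ := Finite.exists_equiv_fin V
  -- Ties are broken lexicographically by an arbitrary enumeration of `V`.
  let r' : ι → V → α ×ₗ Fin n := fun i x => toLex (r i x, e x)
  have hr' : ∀ i, Function.Injective (r' i) := fun i x y hxy =>
    e.injective (congrArg (fun p => (ofLex p).2) hxy)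
  have hs' : IsSlack r' s :=
    ⟨fun i x hx => Prod.Lex.toLex_lt_toLex.2 (.inl (hs.lt_of_ne i x hx)),
      fun x hx i j hij => Prod.Lex.toLex_lt_toLex.2 (.inl (hs.lt_of_notMem_range x hx i j hij))⟩
  obtain ⟨ρ, hρ, hρc⟩ := hs'.exists_isUndominated_of_injective hr' hc
  exact ⟨ρ, fun y => (hρ y).imp fun i hi x hx => Prod.Lex.monotone_fst _ _ (hi x hx), hρc⟩

end Scarf

section Grid

variable {ι : Type*} [Fintype ι]

theorem le_add_of_sum_le_sum_add {u v : ι → ℕ} {k : ℕ} (huv : ∀ i, u i ≤ v i)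
    (hsum : ∑ i, v i ≤ ∑ i, u i + k) (j : ι) : v j ≤ u j + k := by
  classical
  rw [← add_sum_erase _ _ (mem_univ j), ← add_sum_erase _ _ (mem_univ j)] at hsum
  have := sum_le_sum fun i (_ : i ∈ univ.erase j) => huv i
  lia

variable [DecidableEq ι]

theorem exists_mem_piAntidiag_ge [Nonempty ι] {N : ℕ} {u : ι → ℕ} (hu : ∑ i, u i ≤ N) :
    ∃ a ∈ piAntidiag univ N, ∀ i, u i ≤ a i := by
  refine ⟨u + Pi.single (Classical.arbitrary ι) (N - ∑ i, u i), ?_, fun i => ?_⟩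
  · simp [sum_add_distrib, hu]
  · simp

/-- The points `a : ι → ℕ` with coordinate sum `N` (the grid of mesh `1 / N` in the simplex)
together with one slack element for each coordinate. -/
abbrev SlackGrid (ι : Type*) [Fintype ι] [DecidableEq ι] (N : ℕ) : Type _ :=
  piAntidiag (univ : Finset ι) N ⊕ ι

/-- The `i`-th ranking of `SlackGrid ι N`: grid points are ranked by their `i`-th coordinate,
shifted by one to leave room below for the `i`-th slack element; the other slack elements come on
top. -/
def SlackGrid.rank (N : ℕ) (i : ι) : SlackGrid ι N → ℕ
  | .inl a => a.1 i + 1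
  | .inr j => if j = i then 0 else N + 2

theorem SlackGrid.isSlack_inr (N : ℕ) : IsSlack (SlackGrid.rank (ι := ι) N) Sum.inr where
  lt_of_ne i x hx := by
    cases x with
    | inl a => simp [rank]
    | inr j => simp [rank, show j ≠ i by simpa using hx]
  lt_of_notMem_range x hx i j hij := by
    cases x with
    | inl a =>
      have hsum : ∑ i, a.1 i = N := (mem_piAntidiag.1 a.2).1
      have := single_le_sum (f := a.1) (fun _ _ => Nat.zero_le _) (mem_univ i)
      simp only [rank, if_neg hij.symm]
      lia
    | inr k => exact absurd ⟨k, rfl⟩ hx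

theorem IsUndominated.lt_sum_inf'_rank [Nonempty ι] {N : ℕ} {ρ : Finset (SlackGrid ι N)}
    (hρ : IsUndominated (SlackGrid.rank N) ρ) (hne : ρ.Nonempty) :
    N < ∑ i, ρ.inf' hne (SlackGrid.rank N i) := by
  by_contra! hle
  obtain ⟨a, ha, hua⟩ := exists_mem_piAntidiag_ge hle
  obtain ⟨i, hi⟩ := hρ (.inl ⟨a, ha⟩)
  have : a i + 1 ≤ ρ.inf' hne (SlackGrid.rank N i) := le_inf' _ _ hi
  have := hua i
  lia

theorem exists_mem_piAntidiag_forall_color [Nonempty ι] (N : ℕ) (c : (ι → ℕ) → ι) :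
    ∃ a ∈ piAntidiag univ N, ∀ i,
      (∃ b ∈ piAntidiag univ N, c b = i ∧
        ∀ j, a j ≤ b j + Fintype.card ι ∧ b j ≤ a j + Fintype.card ι) ∨
      a i ≤ Fintype.card ι := by
  obtain ⟨ρ, hρ, hρc⟩ := (SlackGrid.isSlack_inr N).exists_isUndominated_image_eq_univ
    (c := Sum.elim (fun a => c a.1) id) fun _ => rfl
  have hcolor : ∀ i, (∃ b : piAntidiag univ N, .inl b ∈ ρ ∧ c b = i) ∨ .inr i ∈ ρ := by
    intro i
    obtain ⟨x | j, hx, rfl⟩ := mem_image.1 (hρc.symm ▸ mem_univ i)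
    · exact .inl ⟨x, hx, rfl⟩
    · exact .inr hx
  have hne : ρ.Nonempty := image_nonempty.1 (hρc.symm ▸ univ_nonempty)
  let u : ι → ℕ := fun i => ρ.inf' hne (SlackGrid.rank N i)
  have hu : N < ∑ i, u i := hρ.lt_sum_inf'_rank hne
  have le_of_mem {a : piAntidiag univ N} (ha : .inl a ∈ ρ) (j : ι) : u j ≤ a.1 j + 1 :=
    inf'_le (b := Sum.inl a) (SlackGrid.rank N j) ha
  have lt_of_mem {a : piAntidiag univ N} (ha : .inl a ∈ ρ) (j : ι) :
      a.1 j + 1 ≤ u j + Fintype.card ι := by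
    refine le_add_of_sum_le_sum_add (v := fun j => a.1 j + 1) (le_of_mem ha) ?_ j
    rw [sum_add_distrib, (mem_piAntidiag.1 a.2).1, sum_const, card_univ, smul_eq_mul, mul_one]
    lia
  have eq_zero_of_slack {i : ι} (hi : .inr i ∈ ρ) : u i = 0 :=
    Nat.le_zero.1 ((inf'_le (SlackGrid.rank N i) hi).trans_eq (by simp [SlackGrid.rank]))
  obtain ⟨a, ha⟩ : ∃ a : piAntidiag univ N, .inl a ∈ ρ := by
    obtain ⟨i, -, hi⟩ := exists_ne_zero_of_sum_ne_zero (Nat.ne_zero_of_lt hu)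
    exact ((hcolor i).resolve_right (mt eq_zero_of_slack hi)).imp fun _ h => h.1
  refine ⟨a, a.2, fun i => (hcolor i).imp ?_ fun hi => ?_⟩
  · rintro ⟨b, hb, hbi⟩
    refine ⟨b, b.2, hbi, fun j => ⟨?_, ?_⟩⟩
    · linarith [lt_of_mem ha j, le_of_mem hb j]
    · linarith [lt_of_mem hb j, le_of_mem ha j]
  · linarith [lt_of_mem ha i, eq_zero_of_slack hi]

end Grid

section Brouwer

variable {ι : Type*} [Fintype ι] [Nonempty ι]

theorem exists_mem_stdSimplex_forall_dist_lt_or_lt {F : ι → Set (ι → ℝ)}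
    (hcover : stdSimplex ℝ ι ⊆ ⋃ i, F i) {ε : ℝ} (hε : 0 < ε) :
    ∃ x ∈ stdSimplex ℝ ι, ∀ i, (∃ y ∈ F i, dist y x < ε) ∨ x i < ε := by
  classical
  obtain ⟨N, hN⟩ := exists_nat_gt ((Fintype.card ι : ℝ) / ε)
  have hN₀ : (0 : ℝ) < N := (by positivity : (0 : ℝ) ≤ Fintype.card ι / ε).trans_lt hN
  have hmesh : (Fintype.card ι : ℝ) / N < ε := (div_lt_comm₀ hε hN₀).1 hN
  let p : (ι → ℕ) → ι → ℝ := fun a i => a i / N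
  have hp : ∀ a ∈ piAntidiag univ N, p a ∈ stdSimplex ℝ ι := fun a ha => by
    refine ⟨fun i => by positivity, ?_⟩
    rw [← sum_div, ← Nat.cast_sum, (mem_piAntidiag.1 ha).1, div_self hN₀.ne']
  have p_le_add {a b : ι → ℕ} {j : ι} (h : a j ≤ b j + Fintype.card ι) :
      p a j ≤ p b j + Fintype.card ι / N := by
    rw [← add_div]
    exact div_le_div_of_nonneg_right (by exact_mod_cast h) hN₀.le
  have hcolor : ∀ a : ι → ℕ, ∃ i, a ∈ piAntidiag univ N → p a ∈ F i := fun a => by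
    by_cases ha : a ∈ piAntidiag univ N
    · exact (Set.mem_iUnion.1 (hcover (hp a ha))).imp fun _ h _ => h
    · exact ⟨Classical.arbitrary ι, fun h => absurd h ha⟩
  choose c hc using hcolor
  obtain ⟨a, ha, hnear⟩ := exists_mem_piAntidiag_forall_color N c
  refine ⟨p a, hp a ha, fun i => (hnear i).imp ?_ fun hai => ?_⟩
  · rintro ⟨b, hb, rfl, hab⟩
    refine ⟨p b, hc b hb, ((dist_pi_le_iff (by positivity)).2 fun j => ?_).trans_lt hmesh⟩
    rw [Real.dist_eq, abs_sub_le_iff]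
    constructor <;> linarith [p_le_add (hab j).1, p_le_add (hab j).2]
  · exact (div_le_div_of_nonneg_right (by exact_mod_cast hai) hN₀.le).trans_lt hmesh

theorem exists_mem_stdSimplex_forall_mem_of_isClosed {F : ι → Set (ι → ℝ)}
    (hF : ∀ i, IsClosed (F i)) (hcover : stdSimplex ℝ ι ⊆ ⋃ i, F i)
    (hfacet : ∀ i, ∀ x ∈ stdSimplex ℝ ι, x i = 0 → x ∈ F i) :
    ∃ x ∈ stdSimplex ℝ ι, ∀ i, x ∈ F i := by
  classical
  by_contra! hno
  -- Thickening `F i` outside the simplex absorbs the points that are merely close to a facet.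
  let G : ι → Set (ι → ℝ) := fun i => F i ∪ {x | x i ≤ 0}
  have hG : ∀ i, IsOpen (G i)ᶜ := fun i =>
    ((hF i).union (isClosed_le (continuous_apply i) continuous_const)).isOpen_compl
  have hGcover : stdSimplex ℝ ι ⊆ ⋃ i, (G i)ᶜ := fun x hx => by
    obtain ⟨i, hi⟩ := hno x hx
    exact Set.mem_iUnion.2 ⟨i, fun h => hi (h.elim id fun h => hfacet i x hx (h.antisymm (hx.1 i)))⟩
  obtain ⟨δ, hδ, hball⟩ :=
    lebesgue_number_lemma_of_metric (isCompact_stdSimplex ℝ ι) hG hGcover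
  obtain ⟨x, hx, hnear⟩ := exists_mem_stdSimplex_forall_dist_lt_or_lt hcover hδ
  obtain ⟨i, hi⟩ := hball x hx
  obtain ⟨y, hy, hyx⟩ | hxi := hnear i
  · exact hi hyx (.inl hy)
  · have hupdate : Function.update x i 0 ∈ Metric.ball x δ := by
      refine Metric.mem_ball.2 ((dist_pi_lt_iff hδ).2 fun j => ?_)
      obtain rfl | hj := eq_or_ne j i
      · simpa [abs_of_nonneg (hx.1 j)] using hxi
      · simpa [hj] using hδ
    exact hi hupdate (.inr (by simp))

theorem exists_mem_stdSimplex_eq_self {f : (ι → ℝ) → ι → ℝ}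
    (hf : ContinuousOn f (stdSimplex ℝ ι))
    (hmaps : Set.MapsTo f (stdSimplex ℝ ι) (stdSimplex ℝ ι)) :
    ∃ x ∈ stdSimplex ℝ ι, f x = x := by
  obtain ⟨x, hx, hxf⟩ := exists_mem_stdSimplex_forall_mem_of_isClosed
    (F := fun i => {x ∈ stdSimplex ℝ ι | x i ≤ f x i})
    (fun i => (isClosed_stdSimplex ℝ ι).isClosed_le (continuous_apply i).continuousOn
      ((continuous_apply i).comp_continuousOn hf))
    (fun x hx => by
      obtain ⟨i, -, hi⟩ := exists_le_of_sum_le univ_nonempty (hx.2.trans (hmaps hx).2.symm).le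
      exact Set.mem_iUnion.2 ⟨i, hx, hi⟩)
    (fun i x hx hxi => ⟨hx, hxi.trans_le ((hmaps hx).1 i)⟩)
  have hle : ∀ i ∈ univ, x i ≤ f x i := fun i _ => (hxf i).2
  have heq := (sum_eq_sum_iff_of_le hle).1 (hx.2.trans (hmaps hx).2.symm)
  exact ⟨x, hx, funext fun i => (heq i (mem_univ i)).symm⟩

end Brouwer

section Incentive

variable {n : ℕ} {s : Fin n → ℕ} {φ : (∀ i, Fin (s i + 1) → ℝ) → ∀ i, Fin (s i + 1) → ℝ}
  {x : ∀ i, Fin (s i + 1) → ℝ}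

theorem mem_Δset_iff_forall_mem_stdSimplex :
    x ∈ Δset s ↔ ∀ i, x i ∈ stdSimplex ℝ (Fin (s i + 1)) :=
  forall_and.symm

theorem Tmap_eq_self_iff (hsum : ∀ i, ∑ β, φ x i β ≠ -1) : Tmap φ x = x ↔ IncEq φ x := by
  simp only [funext_iff, Tmap, IncEq]
  refine forall₂_congr fun i α => ?_
  have hne : 1 + ∑ β, φ x i β ≠ 0 := fun h => hsum i (by linarith)
  rw [div_eq_iff hne, mul_add, mul_one, add_right_inj]

theorem Tmap_mem_Δset (hx : x ∈ Δset s) (hpos : ∀ i α, 0 ≤ x i α + φ x i α)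
    (hsum : ∀ i, ∑ β, φ x i β ≠ -1) : Tmap φ x ∈ Δset s := by
  have htotal : ∀ i, ∑ α, (x i α + φ x i α) = 1 + ∑ β, φ x i β := fun i => by
    rw [sum_add_distrib, hx.2 i]
  refine ⟨fun i α => div_nonneg (hpos i α) ?_, fun i => ?_⟩
  · exact htotal i ▸ sum_nonneg fun β _ => hpos i β
  · simp only [Tmap]
    rw [← sum_div, htotal, div_self fun h => hsum i (by linarith)]

theorem continuousOn_Tmap {S : Set (∀ i, Fin (s i + 1) → ℝ)} (hφ : ContinuousOn φ S)
    (hsum : ∀ x ∈ S, ∀ i, ∑ β, φ x i β ≠ -1) : ContinuousOn (Tmap φ) S := by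
  have hφ' : ∀ i α, ContinuousOn (fun x => φ x i α) S := fun i =>
    continuousOn_pi.1 (continuousOn_pi.1 hφ i)
  refine continuousOn_pi.2 fun i => continuousOn_pi.2 fun α => ?_
  refine ContinuousOn.div (by fun_prop) (by fun_prop) fun x hx h => hsum x hx i (by linarith)

theorem exists_symmetric_incentive_equilibrium_two_player_general {n : ℕ} [NeZero n] (m : ℕ)
    (φ : (∀ i : Fin n, Fin ((fun _ : Fin n => m) i + 1) → ℝ) →
      ∀ i : Fin n, Fin ((fun _ : Fin n => m) i + 1) → ℝ)
    (hsum : ∀ x ∈ Δset (fun _ : Fin n => m), ∀ i, ∑ β, φ x i β ≠ -1)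
    (hcont : ContinuousOn φ (Δset fun _ : Fin n => m))
    (hpos : ∀ x ∈ Δset (fun _ : Fin n => m), ∀ i α, 0 ≤ x i α + φ x i α)
    (hsym : ∀ x ∈ Δset (fun _ : Fin n => m), (∀ i, x i = x 0) → ∀ i, φ x i = φ x 0) :
    ∃ x ∈ Δset (fun _ : Fin n => m), (∀ i, x i = x 0) ∧ IncEq φ x := by
  let diag : (Fin (m + 1) → ℝ) → Fin n → Fin (m + 1) → ℝ := fun y _ => y
  have hdiag : Set.MapsTo diag (stdSimplex ℝ (Fin (m + 1))) (Δset fun _ : Fin n => m) :=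
    fun y hy => mem_Δset_iff_forall_mem_stdSimplex.2 fun _ => hy
  obtain ⟨y, hy, hfix⟩ := exists_mem_stdSimplex_eq_self (f := fun y => Tmap φ (diag y) 0)
    ((continuous_apply 0).comp_continuousOn ((continuousOn_Tmap hcont hsum).comp
      (continuous_pi fun _ => continuous_id).continuousOn hdiag))
    (fun y hy => mem_Δset_iff_forall_mem_stdSimplex.1
      (Tmap_mem_Δset (hdiag hy) (hpos _ (hdiag hy)) (hsum _ (hdiag hy))) 0)
  have hsymφ := hsym (diag y) (hdiag hy) fun _ => rfl
  have hT : Tmap φ (diag y) = diag y := funext fun i => by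
    rw [← show Tmap φ (diag y) 0 = diag y i from hfix]
    funext α
    simp only [Tmap, hsymφ i]
    rfl
  exact ⟨diag y, hdiag hy, fun _ => rfl, (Tmap_eq_self_iff (hsum _ (hdiag hy))).1 hT⟩

end Incentive

/-- Two-player symmetric existence: if a continuous incentive satisfies
`φ_1(x) = φ_2(x)` whenever `x_1 = x_2`, there is a symmetric incentive equilibrium. -/
theorem exists_symmetric_incentive_equilibrium_two_player (m : ℕ)
    (φ : (∀ i : Fin 2, Fin ((fun _ : Fin 2 => m) i + 1) → ℝ) →
      ∀ i : Fin 2, Fin ((fun _ : Fin 2 => m) i + 1) → ℝ)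
    (hφ : IsInc φ) (hcont : Continuous φ)
    (hpos : ∀ x ∈ Δset (fun _ : Fin 2 => m), ∀ i α, 0 ≤ x i α + φ x i α)
    (hsym : ∀ x ∈ Δset (fun _ : Fin 2 => m), x 0 = x 1 → φ x 0 = φ x 1) :
    ∃ x ∈ Δset (fun _ : Fin 2 => m), x 0 = x 1 ∧ IncEq φ x := by
  obtain ⟨x, hx, hxs, hxφ⟩ := exists_symmetric_incentive_equilibrium_two_player_general m φ
    (fun x _ => hφ.2 x) hcont.continuousOn hpos
    fun x hx h => Fin.forall_fin_two.2 ⟨rfl, (hsym x hx (h 1).symm).symm⟩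
  exact ⟨x, hx, (hxs 1).symm, hxφ⟩
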